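/- arXiv:2605.17847 — 2 statements merged into one kernel-verified Lean document; each statement's English description precedes it below -/
import Mathlib

section
/- Every vertex of Γ(R) that is not of the form x·uv with x ∈ 𝔽_p* has eccentricity exactly 2 in Γ(R). -/
/- `Rng p` models the ring `R = 𝔽_p[u,v]/⟨u², v², uv - vu⟩`:
every element is uniquely `a + b·u + c·v + d·uv` with `a b c d : ZMod p`. -/
set_option synthInstance.maxHeartbeats 1000000
set_option maxHeartbeats 1000000

abbrev Rng (p : ℕ) : Type := DualNumber (DualNumber (ZMod p))

/-- The element `u` of `R` (satisfies `u² = 0`). -/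
def uu (p : ℕ) : Rng p := TrivSqZeroExt.inl DualNumber.eps

/-- The element `v` of `R` (satisfies `v² = 0`). -/
def vv (p : ℕ) : Rng p := DualNumber.eps

/-- The vertex set `Z*(R)`: nonzero zero-divisors of `R`. -/
abbrev Vtx (p : ℕ) : Type := {x : Rng p // x ≠ 0 ∧ ∃ y : Rng p, y ≠ 0 ∧ x * y = 0}

/-- The zero-divisor graph `Γ(R)`. -/
def ZDG (p : ℕ) : SimpleGraph (Vtx p) where
  Adj a b := a ≠ b ∧ (a : Rng p) * (b : Rng p) = 0
  symm := ⟨fun a b h => ⟨h.1.symm, (mul_comm (b : Rng p) (a : Rng p)).trans h.2⟩⟩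
  loopless := ⟨fun a h => h.1 rfl⟩

instance (p : ℕ) : DecidableEq (Rng p) :=
  inferInstanceAs (DecidableEq ((ZMod p × ZMod p) × ZMod p × ZMod p))

instance (p : ℕ) [NeZero p] : Fintype (Rng p) :=
  inferInstanceAs (Fintype ((ZMod p × ZMod p) × ZMod p × ZMod p))

instance (p : ℕ) : DecidableRel (ZDG p).Adj :=
  fun a b => inferInstanceAs (Decidable (a ≠ b ∧ (a : Rng p) * (b : Rng p) = 0))

/-!
Every zero-divisor of `R = K[u, v]/(u², v²)` has constant coefficient zero, so `uv` annihilates all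
of them and any two vertices are at distance at most `2` through `uv`. Conversely, if
`a = bu + cv + d·uv` then `a·u = c·uv` and `a·v = b·uv`; unless `a` is a multiple of `uv`, one of
these products is nonzero, and so `u` or `v` is a vertex not adjacent to `a`. It differs from `a`
because `u² = v² = 0`, so its distance from `a` is at least `2`.
-/

open scoped DualNumber nonZeroDivisors

/-- The nonzero zero-divisors of `R`, the vertices of its zero-divisor graph. -/
abbrev NonzeroZeroDivisor (R : Type*) [CommMonoidWithZero R] : Type _ :=
  {x : R // x ≠ 0 ∧ ∃ y : R, y ≠ 0 ∧ x * y = 0}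

/-- The zero-divisor graph of `R`, in which distinct nonzero zero-divisors are adjacent when their
product vanishes. For `R = Rng p` it is `ZDG p` by definition. -/
def zeroDivisorGraph (R : Type*) [CommMonoidWithZero R] : SimpleGraph (NonzeroZeroDivisor R) where
  Adj a b := a ≠ b ∧ (a : R) * (b : R) = 0
  symm := ⟨fun a b h => ⟨h.1.symm, (mul_comm (b : R) (a : R)).trans h.2⟩⟩
  loopless := ⟨fun _ h => h.1 rfl⟩

namespace zeroDivisorGraph

variable {R : Type*} [CommMonoidWithZero R]

theorem edist_le_one_of_mul_eq_zero {a b : NonzeroZeroDivisor R} (hab : (a : R) * b = 0) :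
    (zeroDivisorGraph R).edist a b ≤ 1 := by
  rw [SimpleGraph.edist_le_one_iff_adj_or_eq]
  by_cases h : a = b
  · exact Or.inr h
  · exact Or.inl ⟨h, hab⟩

theorem eccent_le_two_of_forall_mul_eq_zero {w : R} (hw : w ≠ 0)
    (hmul : ∀ b : NonzeroZeroDivisor R, (b : R) * w = 0) (a : NonzeroZeroDivisor R) :
    (zeroDivisorGraph R).eccent a ≤ 2 := by
  let c : NonzeroZeroDivisor R := ⟨w, hw, a, a.2.1, (mul_comm w a).trans (hmul a)⟩
  have edist_c_le (b : NonzeroZeroDivisor R) : (zeroDivisorGraph R).edist b c ≤ 1 :=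
    edist_le_one_of_mul_eq_zero (hmul b)
  refine iSup_le fun b => ?_
  calc (zeroDivisorGraph R).edist a b
      ≤ (zeroDivisorGraph R).edist a c + (zeroDivisorGraph R).edist c b :=
        SimpleGraph.edist_triangle
    _ ≤ 1 + 1 := add_le_add (edist_c_le a) (SimpleGraph.edist_comm.trans_le (edist_c_le b))
    _ = 2 := one_add_one_eq_two

theorem two_le_eccent_of_mul_self_eq_zero_of_mul_ne_zero {a : NonzeroZeroDivisor R} {s : R}
    (hs : s * s = 0) (has : (a : R) * s ≠ 0) : 2 ≤ (zeroDivisorGraph R).eccent a := by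
  have hs0 : s ≠ 0 := right_ne_zero_of_mul has
  let b : NonzeroZeroDivisor R := ⟨s, hs0, s, hs0, hs⟩
  have hab : a ≠ b := fun h => has (by rw [h]; exact hs)
  have two_le_edist : 2 ≤ (zeroDivisorGraph R).edist a b := by
    rw [← not_lt, ENat.lt_two_iff, SimpleGraph.edist_le_one_iff_adj_or_eq]
    rintro (hadj | heq)
    · exact has hadj.2
    · exact hab heq
  exact two_le_edist.trans SimpleGraph.edist_le_eccent

end zeroDivisorGraph

theorem dualNumber_mem_nonZeroDivisors_of_fst_mem {A : Type*} [CommSemiring A] {x : A[ε]}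
    (hx : x.fst ∈ A⁰) : x ∈ A[ε]⁰ := by
  rw [mem_nonZeroDivisors_iff_right] at hx ⊢
  intro y hxy
  have hfst : y.fst = 0 := hx _ (by simpa using congrArg TrivSqZeroExt.fst hxy)
  have hsnd : y.snd = 0 :=
    hx _ (by simpa [hfst, mul_comm] using congrArg TrivSqZeroExt.snd hxy)
  exact TrivSqZeroExt.ext hfst hsnd

/-- The hyper-dual numbers `K[u, v]/(u², v²)`, as dual numbers over dual numbers: the inner
infinitesimal is `u` and the outer one is `v`, so `b₀₀ + b₁₀ u + b₀₁ v + b₁₁ uv` is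
`((b₀₀, b₁₀), (b₀₁, b₁₁))`. -/
abbrev HyperDualNumber (K : Type*) : Type _ := K[ε][ε]

namespace HyperDualNumber

variable {K : Type*} [CommSemiring K]

variable (K) in
/-- The inner infinitesimal `u` of `K[u, v]/(u², v²)`. -/
def u : HyperDualNumber K := TrivSqZeroExt.inl ε

variable (K) in
/-- The outer infinitesimal `v` of `K[u, v]/(u², v²)`. -/
def v : HyperDualNumber K := ε

theorem u_mul_u : u K * u K = 0 := by
  rw [u, ← TrivSqZeroExt.inl_mul, DualNumber.eps_mul_eps, TrivSqZeroExt.inl_zero]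

theorem v_mul_v : v K * v K = 0 :=
  DualNumber.eps_mul_eps

theorem u_mul_v_eq : u K * v K = TrivSqZeroExt.inr ε := by
  ext <;> simp [u, v]

theorem smul_u_mul_v_eq_zero_iff {k : K} : k • (u K * v K) = 0 ↔ k = 0 := by
  refine ⟨fun h => ?_, fun h => by rw [h, zero_smul]⟩
  simpa [u_mul_v_eq] using congrArg (fun x : HyperDualNumber K => x.snd.snd) h

theorem u_mul_v_ne_zero [Nontrivial K] : u K * v K ≠ 0 := by
  simpa only [one_smul] using smul_u_mul_v_eq_zero_iff.not.mpr (one_ne_zero (α := K))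

theorem mul_u_mul_v_eq_smul (x : HyperDualNumber K) :
    x * (u K * v K) = x.fst.fst • (u K * v K) := by
  ext <;> simp [u_mul_v_eq]

theorem mul_u_eq_smul {x : HyperDualNumber K} (hx : x.fst.fst = 0) :
    x * u K = x.snd.fst • (u K * v K) := by
  ext <;> simp [u, v, hx]

theorem mul_v_eq_smul {x : HyperDualNumber K} (hx : x.fst.fst = 0) :
    x * v K = x.fst.snd • (u K * v K) := by
  ext <;> simp [u, v, hx]

theorem eq_smul_u_mul_v {x : HyperDualNumber K} (hx : x.fst.fst = 0) (hu : x * u K = 0)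
    (hv : x * v K = 0) : x = x.snd.snd • (u K * v K) := by
  rw [mul_u_eq_smul hx, smul_u_mul_v_eq_zero_iff] at hu
  rw [mul_v_eq_smul hx, smul_u_mul_v_eq_zero_iff] at hv
  ext <;> simp [u_mul_v_eq, hx, hu, hv]

theorem fst_fst_eq_zero_of_zeroDivisor [NoZeroDivisors K]
    (a : NonzeroZeroDivisor (HyperDualNumber K)) : a.1.fst.fst = 0 := by
  obtain ⟨x, -, y, hy, hxy⟩ := a
  by_contra hx
  have hreg : x ∈ (HyperDualNumber K)⁰ :=
    dualNumber_mem_nonZeroDivisors_of_fst_mem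
      (dualNumber_mem_nonZeroDivisors_of_fst_mem (mem_nonZeroDivisors_of_ne_zero hx))
  exact hy ((mul_right_mem_nonZeroDivisors_eq_zero_iff hreg).mp ((mul_comm y x).trans hxy))

end HyperDualNumber

open HyperDualNumber in
theorem stmt7_general {K : Type*} [CommSemiring K] [NoZeroDivisors K]
    (a : NonzeroZeroDivisor (HyperDualNumber K))
    (ha : ¬ ∃ x : K, x ≠ 0 ∧ (a : HyperDualNumber K) = x • (u K * v K)) :
    (zeroDivisorGraph (HyperDualNumber K)).eccent a = 2 := by
  have : Nontrivial (HyperDualNumber K) := nontrivial_of_ne _ _ a.2.1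
  have : Nontrivial K := Module.nontrivial K (HyperDualNumber K)
  apply le_antisymm
  · refine zeroDivisorGraph.eccent_le_two_of_forall_mul_eq_zero u_mul_v_ne_zero (fun b => ?_) a
    rw [mul_u_mul_v_eq_smul, fst_fst_eq_zero_of_zeroDivisor, zero_smul]
  · by_cases hu : (a : HyperDualNumber K) * u K = 0
    · have hv : (a : HyperDualNumber K) * v K ≠ 0 := by
        intro hv
        have ha_eq := eq_smul_u_mul_v (fst_fst_eq_zero_of_zeroDivisor a) hu hv
        refine ha ⟨_, fun hzero => a.2.1 ?_, ha_eq⟩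
        rw [ha_eq, hzero, zero_smul]
      exact zeroDivisorGraph.two_le_eccent_of_mul_self_eq_zero_of_mul_ne_zero v_mul_v hv
    · exact zeroDivisorGraph.two_le_eccent_of_mul_self_eq_zero_of_mul_ne_zero u_mul_u hu

theorem stmt7 (p : ℕ) [Fact p.Prime] (hodd : Odd p) (a : Vtx p)
    (ha : ¬ ∃ x : ZMod p, x ≠ 0 ∧ (a : Rng p) = x • (uu p * vv p)) :
    (⨆ b : Vtx p, (ZDG p).edist a b) = 2 :=
  stmt7_general a ha
end

section
/- For every x ∈ 𝔽_p*, the degree of the vertex x·u in Γ(R) equals p² − 2, the degree of the vertex x·v equals p² − 2, and the degree of the vertex x·uv equals p³ − 2. -/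
/- `Rng p` models the ring `R = 𝔽_p[u,v]/⟨u², v², uv - vu⟩`:
every element is uniquely `a + b·u + c·v + d·uv` with `a b c d : ZMod p`. -/
set_option synthInstance.maxHeartbeats 1000000
set_option maxHeartbeats 1000000

/-!
If `a ^ 2 = 0`, the neighbours of `a` are the elements of its annihilator other than `0` and `a`, so
`a` has degree `|Ann a| - 2`. Multiplying `a` by a unit does not change `Ann a`. Annihilators in a
square-zero extension `R ⊕ M` split along the two summands, `|Ann (inl r)| = |Ann_R r| * |Ann_M r|`
and `|Ann (inr m)| = |Ann_R m| * |M|`. Since `u = inl ε`, `v = inr 1` and `u * v = inr ε`, applying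
this to both layers of `𝔽_p[ε][ε]` gives annihilators of sizes `p * p`, `1 * p ^ 2` and `p * p ^ 2`.
-/

open TrivSqZeroExt

theorem card_trivSqZeroExt (R M : Type*) :
    Nat.card (TrivSqZeroExt R M) = Nat.card R * Nat.card M :=
  Nat.card_prod R M

section Annihilator

variable {R M : Type*} [Semiring R] [AddCommMonoid M] [Module R M] [Module Rᵐᵒᵖ M]

theorem inl_mul_eq_zero_iff {r : R} {y : TrivSqZeroExt R M} :
    inl r * y = 0 ↔ r * y.fst = 0 ∧ r • y.snd = 0 := by
  simp [TrivSqZeroExt.ext_iff]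

theorem inr_mul_eq_zero_iff {m : M} {y : TrivSqZeroExt R M} :
    inr m * y = 0 ↔ MulOpposite.op y.fst • m = 0 := by
  simp [TrivSqZeroExt.ext_iff]

theorem card_annihilator_inl (r : R) :
    Nat.card {y : TrivSqZeroExt R M // inl r * y = 0} =
      Nat.card {s : R // r * s = 0} * Nat.card {m : M // r • m = 0} := by
  rw [← Nat.card_prod]
  exact Nat.card_congr <| (Equiv.subtypeEquivRight fun _ ↦ inl_mul_eq_zero_iff).trans
    (Equiv.subtypeProdEquivProd (p := fun s : R ↦ r * s = 0) (q := fun m : M ↦ r • m = 0))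

theorem card_annihilator_inr (m : M) :
    Nat.card {y : TrivSqZeroExt R M // inr m * y = 0} =
      Nat.card {s : R // MulOpposite.op s • m = 0} * Nat.card M := by
  rw [← Nat.card_prod]
  exact Nat.card_congr <| (Equiv.subtypeEquivRight fun _ ↦ inr_mul_eq_zero_iff).trans
    (Equiv.prodSubtypeFstEquivSubtypeProd (β := M) (p := fun s : R ↦ MulOpposite.op s • m = 0))

theorem card_annihilator_eps :
    Nat.card {y : DualNumber R // DualNumber.eps * y = 0} = Nat.card R := by
  simp only [DualNumber.eps, card_annihilator_inr, op_smul_eq_mul, one_mul, Nat.card_unique]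

end Annihilator

section ZeroDivisorGraph

variable {p : ℕ}

theorem card_annihilator_uu : Nat.card {y : Rng p // uu p * y = 0} = p ^ 2 := by
  simp only [uu, card_annihilator_inl, smul_eq_mul, card_annihilator_eps, Nat.card_zmod, sq]

theorem card_annihilator_vv : Nat.card {y : Rng p // vv p * y = 0} = p ^ 2 := by
  simp only [vv, card_annihilator_eps, card_trivSqZeroExt, Nat.card_zmod, sq]

theorem uu_mul_vv : uu p * vv p = inr DualNumber.eps :=
  (inl_mul_inr _ _).trans (congrArg inr (mul_one _))

theorem card_annihilator_uu_mul_vv :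
    Nat.card {y : Rng p // uu p * vv p * y = 0} = p ^ 3 := by
  simp only [uu_mul_vv, card_annihilator_inr, op_smul_eq_mul, card_annihilator_eps,
    card_trivSqZeroExt, Nat.card_zmod]
  ring

theorem uu_mul_self : uu p * uu p = 0 := by
  rw [uu, inl_mul_inl, DualNumber.eps_mul_eps, inl_zero]

theorem vv_mul_self : vv p * vv p = 0 := DualNumber.eps_mul_eps

theorem uu_mul_vv_mul_self : uu p * vv p * (uu p * vv p) = 0 := by
  rw [uu_mul_vv, inr_mul_inr]

variable [NeZero p]

theorem map_neighborFinset_ZDG (a : Vtx p) :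
    ((ZDG p).neighborFinset a).map (Function.Embedding.subtype _) =
      (({y | (a : Rng p) * y = 0} : Finset (Rng p)).erase 0).erase a := by
  ext y
  simp only [Finset.mem_map, SimpleGraph.mem_neighborFinset, Function.Embedding.subtype_apply,
    Finset.mem_erase, Finset.mem_filter_univ]
  constructor
  · rintro ⟨b, ⟨hne, hab⟩, rfl⟩
    exact ⟨fun hba ↦ hne (Subtype.ext hba.symm), b.2.1, hab⟩
  · rintro ⟨hya, hy0, hay⟩
    exact ⟨⟨y, hy0, a, a.2.1, (mul_comm y a).trans hay⟩,
      ⟨fun hab ↦ hya (congrArg Subtype.val hab).symm, hay⟩, rfl⟩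

theorem degree_ZDG_of_mul_self_eq_zero {a : Vtx p} (ha : (a : Rng p) * a = 0) :
    (ZDG p).degree a = Nat.card {y : Rng p // (a : Rng p) * y = 0} - 2 := by
  rw [← SimpleGraph.card_neighborFinset_eq_degree, ← Finset.card_map, map_neighborFinset_ZDG,
    Finset.card_erase_of_mem (by simp [a.2.1, ha]), Finset.card_erase_of_mem (by simp),
    Nat.sub_sub, Nat.card_eq_fintype_card, Fintype.card_subtype]

theorem degree_ZDG_of_eq_isUnit_smul {a : Vtx p} {x : ZMod p} {w : Rng p} (hx : IsUnit x)
    (hw : w * w = 0) (ha : (a : Rng p) = x • w) :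
    (ZDG p).degree a = Nat.card {y : Rng p // w * y = 0} - 2 := by
  have annihilator_eq (y : Rng p) : (a : Rng p) * y = 0 ↔ w * y = 0 := by
    rw [ha, smul_mul_assoc, hx.smul_eq_zero]
  have ha_sq : (a : Rng p) * a = 0 := by
    rw [annihilator_eq, ha, mul_smul_comm, hw, smul_zero]
  simp only [degree_ZDG_of_mul_self_eq_zero ha_sq, annihilator_eq]

end ZeroDivisorGraph

theorem stmt17_general (p : ℕ) [NeZero p] {x : ZMod p} (hx : IsUnit x) (a : Vtx p) :
    ((a : Rng p) = x • uu p → (ZDG p).degree a = p ^ 2 - 2) ∧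
      ((a : Rng p) = x • vv p → (ZDG p).degree a = p ^ 2 - 2) ∧
      ((a : Rng p) = x • (uu p * vv p) → (ZDG p).degree a = p ^ 3 - 2) := by
  refine ⟨fun ha ↦ ?_, fun ha ↦ ?_, fun ha ↦ ?_⟩
  · rw [degree_ZDG_of_eq_isUnit_smul hx uu_mul_self ha, card_annihilator_uu]
  · rw [degree_ZDG_of_eq_isUnit_smul hx vv_mul_self ha, card_annihilator_vv]
  · rw [degree_ZDG_of_eq_isUnit_smul hx uu_mul_vv_mul_self ha, card_annihilator_uu_mul_vv]

theorem stmt17 (p : ℕ) [Fact p.Prime] (hodd : Odd p) :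
    (∀ a : Vtx p, (∃ x : ZMod p, x ≠ 0 ∧ (a : Rng p) = x • uu p) →
        (ZDG p).degree a = p ^ 2 - 2) ∧
      (∀ a : Vtx p, (∃ x : ZMod p, x ≠ 0 ∧ (a : Rng p) = x • vv p) →
        (ZDG p).degree a = p ^ 2 - 2) ∧
      (∀ a : Vtx p, (∃ x : ZMod p, x ≠ 0 ∧ (a : Rng p) = x • (uu p * vv p)) →
        (ZDG p).degree a = p ^ 3 - 2) :=
  ⟨fun a ⟨_, hx, ha⟩ ↦ (stmt17_general p hx.isUnit a).1 ha,
    fun a ⟨_, hx, ha⟩ ↦ (stmt17_general p hx.isUnit a).2.1 ha,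
    fun a ⟨_, hx, ha⟩ ↦ (stmt17_general p hx.isUnit a).2.2 ha⟩
end
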